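/- Let N ≥ 1, let 0 < ρ < ρ′, and let A = (A₁,…,A_N) be an N-tuple of bounded linear operators on a complex Hilbert space X. Then w_{ρ′,N}(A) ≤ w_{ρ,N}(A) ≤ (2ρ′/ρ − 1)·w_{ρ′,N}(A). -/

import Mathlib

open ContinuousLinearMap

noncomputable section

/-- A continuous linear operator on a complex Hilbert space is unitary. -/
def IsUnitaryOp {Y : Type*} [NormedAddCommGroup Y] [InnerProductSpace ℂ Y] [CompleteSpace Y]
    (T : Y →L[ℂ] Y) : Prop :=
  T ∘L adjoint T = 1 ∧ adjoint T ∘L T = 1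

/-- A unitary `ρ`-dilation of an `N`-tuple of bounded operators on a complex Hilbert space `X`:
a complex Hilbert space `Y`, a linear isometry `ι : X → Y`, and an `N`-tuple `At` of operators
on `Y` such that every unimodular combination `ζ₁At₁ + ⋯ + ζ_N At_N` is unitary, and
`(z₁A₁ + ⋯ + z_N A_N)ⁿ = ρ · ι* ∘ (z₁At₁ + ⋯ + z_N At_N)ⁿ ∘ ι` for all `z ∈ ℂ^N` and `n ≥ 1`. -/
structure UnitaryRhoDilation (N : ℕ) (ρ : ℝ) (X : Type*) [NormedAddCommGroup X]
    [InnerProductSpace ℂ X] [CompleteSpace X] (A : Fin N → X →L[ℂ] X) where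
  Y : Type
  [instN : NormedAddCommGroup Y]
  [instI : InnerProductSpace ℂ Y]
  [instC : CompleteSpace Y]
  ι : X →L[ℂ] Y
  isom : Isometry ι
  At : Fin N → Y →L[ℂ] Y
  unit : ∀ ζ : Fin N → ℂ, (∀ k, ‖ζ k‖ = 1) → IsUnitaryOp (∑ k, ζ k • At k)
  dil : ∀ (z : Fin N → ℂ) (n : ℕ), 1 ≤ n →
    (∑ k, z k • A k) ^ n = (ρ : ℂ) • (adjoint ι ∘L (((∑ k, z k • At k) ^ n) ∘L ι))

/-- The class `C_{ρ,N}`: `N`-tuples of bounded operators admitting a unitary `ρ`-dilation. -/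
def MemC (N : ℕ) (ρ : ℝ) {X : Type*} [NormedAddCommGroup X] [InnerProductSpace ℂ X]
    [CompleteSpace X] (A : Fin N → X →L[ℂ] X) : Prop :=
  Nonempty (UnitaryRhoDilation N ρ X A)

/-- The set of positive scalings `u` with `(1/u)·A ∈ C_{ρ,N}`. -/
def wSet (N : ℕ) (ρ : ℝ) {X : Type*} [NormedAddCommGroup X] [InnerProductSpace ℂ X]
    [CompleteSpace X] (A : Fin N → X →L[ℂ] X) : Set ℝ :=
  {u : ℝ | 0 < u ∧ MemC N ρ (fun k => ((u : ℂ))⁻¹ • A k)}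

/-- The operator radius `w_{ρ,N}(A) = inf { u > 0 : (1/u)·A ∈ C_{ρ,N} }`. -/
def wRad (N : ℕ) (ρ : ℝ) {X : Type*} [NormedAddCommGroup X] [InnerProductSpace ℂ X]
    [CompleteSpace X] (A : Fin N → X →L[ℂ] X) : ℝ :=
  sInf (wSet N ρ A)

/-- The map `f ↦ (i ↦ T (f (σ i)))` on `ℓ²(I; Y)`. -/
def shiftOp {I Y : Type} [NormedAddCommGroup Y] [InnerProductSpace ℂ Y]
    (σ : Equiv.Perm I) (T : Y →L[ℂ] Y) :
    lp (fun _ : I => Y) 2 →L[ℂ] lp (fun _ : I => Y) 2 :=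
  LinearMap.mkContinuous
    { toFun := fun f => ⟨fun i => T (f (σ i)), by
        have hs : Summable fun i => ‖f (σ i)‖ ^ (2 : ENNReal).toReal :=
          ((lp.memℓp f).summable (by norm_num)).comp_injective σ.injective
        refine memℓp_gen ?_
        refine Summable.of_nonneg_of_le (fun i => by positivity) (fun i => ?_)
          (hs.mul_left (‖T‖ ^ (2 : ENNReal).toReal))
        rw [← Real.mul_rpow (norm_nonneg _) (norm_nonneg _)]
        exact Real.rpow_le_rpow (norm_nonneg _) (T.le_opNorm _) (by norm_num)⟩
      map_add' := fun f g => by ext i; exact map_add T _ _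
      map_smul' := fun c f => by ext i; exact map_smul T c _ }
    ‖T‖ (fun f => by
      have hf := (lp.memℓp f).summable (by norm_num : 0 < (2 : ENNReal).toReal)
      refine lp.norm_le_of_tsum_le (by norm_num) (by positivity) ?_
      rw [Real.mul_rpow (norm_nonneg _) (norm_nonneg _),
        lp.norm_rpow_eq_tsum (by norm_num) f, ← σ.tsum_eq (fun i => ‖f i‖ ^ (2 : ENNReal).toReal),
        ← tsum_mul_left]
      have hs : Summable fun i => ‖f (σ i)‖ ^ (2 : ENNReal).toReal :=
        hf.comp_injective σ.injective
      have hle : ∀ i, ‖T (f (σ i))‖ ^ (2 : ENNReal).toReal ≤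
          ‖T‖ ^ (2 : ENNReal).toReal * ‖f (σ i)‖ ^ (2 : ENNReal).toReal := fun i => by
        rw [← Real.mul_rpow (norm_nonneg _) (norm_nonneg _)]
        exact Real.rpow_le_rpow (norm_nonneg _) (T.le_opNorm _) (by norm_num)
      exact Summable.tsum_le_tsum hle
        (Summable.of_nonneg_of_le (fun i => by positivity) hle (hs.mul_left _)) (hs.mul_left _))

theorem shiftOp_apply {I Y : Type} [NormedAddCommGroup Y] [InnerProductSpace ℂ Y]
    (σ : Equiv.Perm I) (T : Y →L[ℂ] Y) (f : lp (fun _ : I => Y) 2) (i : I) :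
    shiftOp σ T f i = T (f (σ i)) := rfl

theorem shiftOp_comp {I Y : Type} [NormedAddCommGroup Y] [InnerProductSpace ℂ Y]
    (σ τ : Equiv.Perm I) (T S : Y →L[ℂ] Y) :
    shiftOp σ T ∘L shiftOp τ S = shiftOp (τ * σ) (T ∘L S) := by
  ext f i; rfl

theorem shiftOp_one {I Y : Type} [NormedAddCommGroup Y] [InnerProductSpace ℂ Y] :
    shiftOp (1 : Equiv.Perm I) (1 : Y →L[ℂ] Y) = 1 := by
  ext f i; rfl

theorem shiftOp_pow {I Y : Type} [NormedAddCommGroup Y] [InnerProductSpace ℂ Y]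
    (σ : Equiv.Perm I) (T : Y →L[ℂ] Y) (n : ℕ) :
    shiftOp σ T ^ n = shiftOp (σ ^ n) (T ^ n) := by
  induction n with
  | zero => exact shiftOp_one.symm
  | succ n ih =>
    rw [pow_succ, ih, pow_succ' σ, pow_succ T]
    exact shiftOp_comp _ _ _ _

theorem shiftOp_sum {I Y : Type} [NormedAddCommGroup Y] [InnerProductSpace ℂ Y]
    (σ : Equiv.Perm I) {N : ℕ} (z : Fin N → ℂ) (T : Fin N → Y →L[ℂ] Y) :
    ∑ k, z k • shiftOp σ (T k) = shiftOp σ (∑ k, z k • T k) := by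
  ext f i
  have h1 : (∑ k, z k • shiftOp σ (T k)) f = ∑ k, z k • shiftOp σ (T k) f := by
    simp
  have h2 : (∑ k, z k • T k) (f (σ i)) = ∑ k, z k • T k (f (σ i)) := by
    simp
  rw [h1, shiftOp_apply, h2, lp.coeFn_sum, Finset.sum_apply]
  rfl

theorem shiftOp_adjoint {I Y : Type} [NormedAddCommGroup Y] [InnerProductSpace ℂ Y]
    [CompleteSpace Y] (σ : Equiv.Perm I) (T : Y →L[ℂ] Y) :
    adjoint (shiftOp σ T) = shiftOp σ⁻¹ (adjoint T) := by
  symm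
  rw [ContinuousLinearMap.eq_adjoint_iff]
  intro f h
  rw [lp.inner_eq_tsum, lp.inner_eq_tsum, ← σ.tsum_eq]
  refine tsum_congr fun i => ?_
  simp [shiftOp_apply, ContinuousLinearMap.adjoint_inner_left]

theorem shiftOp_unitary {I Y : Type} [NormedAddCommGroup Y] [InnerProductSpace ℂ Y]
    [CompleteSpace Y] (σ : Equiv.Perm I) (T : Y →L[ℂ] Y) (hT : IsUnitaryOp T) :
    IsUnitaryOp (shiftOp σ T) := by
  constructor
  · rw [shiftOp_adjoint, shiftOp_comp, hT.1, inv_mul_cancel, shiftOp_one]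
  · rw [shiftOp_adjoint, shiftOp_comp, hT.2, mul_inv_cancel, shiftOp_one]

theorem embed_memlp {I Y : Type} [NormedAddCommGroup Y] [InnerProductSpace ℂ Y]
    (g : I → ℝ) (hg : HasSum (fun i => g i * g i) 1) (y : Y) :
    Memℓp (fun i => (g i : ℂ) • y : I → Y) 2 := by
  refine memℓp_gen ?_
  refine (hg.summable.mul_right (‖y‖ ^ 2)).congr fun i => ?_
  simp only [norm_smul, ENNReal.toReal_ofNat, Real.rpow_ofNat, Complex.norm_real, Real.norm_eq_abs,
    mul_pow, sq_abs]
  ring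

/-- The isometry `y ↦ (g i • y)ᵢ`. -/
def embed {I Y : Type} [NormedAddCommGroup Y] [InnerProductSpace ℂ Y]
    (g : I → ℝ) (hg : HasSum (fun i => g i * g i) 1) : Y →ₗᵢ[ℂ] lp (fun _ : I => Y) 2 where
  toFun y := ⟨fun i => (g i : ℂ) • y, embed_memlp g hg y⟩
  map_add' x y := by ext i; exact smul_add _ _ _
  map_smul' c y := by ext i; exact smul_comm _ _ _
  norm_map' y := by
    have h : ‖(⟨fun i => (g i : ℂ) • y, embed_memlp g hg y⟩ : lp (fun _ : I => Y) 2)‖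
        ^ (2 : ENNReal).toReal = ‖y‖ ^ (2 : ENNReal).toReal := by
      rw [lp.norm_rpow_eq_tsum (by norm_num)]
      have := (hg.mul_right (‖y‖ ^ 2)).tsum_eq
      rw [one_mul] at this
      simp only [ENNReal.toReal_ofNat, Real.rpow_ofNat]
      rw [← this]
      refine tsum_congr fun i => ?_
      simp only [norm_smul, Complex.norm_real, Real.norm_eq_abs, mul_pow, sq_abs]
      ring
    simp only [ENNReal.toReal_ofNat, Real.rpow_ofNat] at h
    exact (sq_eq_sq₀ (norm_nonneg _) (norm_nonneg _)).1 h

theorem embed_apply {I Y : Type} [NormedAddCommGroup Y] [InnerProductSpace ℂ Y]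
    (g : I → ℝ) (hg : HasSum (fun i => g i * g i) 1) (y : Y) (i : I) :
    embed g hg y i = (g i : ℂ) • y := rfl

theorem inner_embed {I Y : Type} [NormedAddCommGroup Y] [InnerProductSpace ℂ Y]
    (g : I → ℝ) (hg : HasSum (fun i => g i * g i) 1) (σ : Equiv.Perm I) (T : Y →L[ℂ] Y)
    (c : ℝ) (hc : HasSum (fun i => g (σ i) * g i) c) (x y : Y) :
    inner ℂ (embed g hg y) (shiftOp σ T (embed g hg x)) = (c : ℂ) * inner ℂ y (T x) := by
  rw [lp.inner_eq_tsum]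
  have h := ((Complex.hasSum_ofReal.2 hc).mul_right (inner ℂ y (T x))).tsum_eq
  rw [← h]
  refine tsum_congr fun i => ?_
  rw [shiftOp_apply, embed_apply, embed_apply, map_smul, inner_smul_left, inner_smul_right]
  simp
  ring

theorem key (N : ℕ) (ρ ρ₁ t : ℝ) (hρ₁ : ρ₁ ≠ 0) {X : Type*} [NormedAddCommGroup X]
    [InnerProductSpace ℂ X] [CompleteSpace X] (A : Fin N → X →L[ℂ] X)
    {I : Type} (σ : Equiv.Perm I) (g : I → ℝ) (hg : HasSum (fun i => g i * g i) 1)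
    (hc : ∀ n : ℕ, 1 ≤ n → HasSum (fun i => g ((σ ^ n) i) * g i) (t ^ n * ρ / ρ₁))
    (h : MemC N ρ A) : MemC N ρ₁ (fun k => (t : ℂ) • A k) := by
  obtain ⟨D⟩ := h
  letI := D.instN
  letI := D.instI
  letI := D.instC
  refine ⟨{ Y := lp (fun _ : I => D.Y) 2
            ι := (embed g hg).toContinuousLinearMap ∘L D.ι
            isom := (embed g hg).isometry.comp D.isom
            At := fun k => shiftOp σ (D.At k)
            unit := fun ζ hζ => ?_
            dil := fun z n hn => ?_ }⟩
  · rw [shiftOp_sum]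
    exact shiftOp_unitary _ _ (D.unit ζ hζ)
  · rw [shiftOp_sum, shiftOp_pow]
    have h1 : ∑ k, z k • (t : ℂ) • A k = (t : ℂ) • ∑ k, z k • A k := by
      rw [Finset.smul_sum]
      exact Finset.sum_congr rfl fun k _ => smul_comm _ _ _
    rw [h1, smul_pow, D.dil z n hn]
    ext x
    refine ext_inner_left ℂ fun y => ?_
    have h2 := inner_embed g hg (σ ^ n) ((∑ k, z k • D.At k) ^ n) _ (hc n hn) (D.ι x) (D.ι y)
    have h3 : (ρ₁ : ℂ) ≠ 0 := by exact_mod_cast hρ₁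
    simp only [ContinuousLinearMap.smul_apply, inner_smul_right, ContinuousLinearMap.comp_apply,
      ContinuousLinearMap.adjoint_inner_right, LinearIsometry.coe_toContinuousLinearMap]
    rw [h2]
    push_cast
    field_simp

theorem memC_mono (N : ℕ) (ρ ρ' : ℝ) (hρ : 0 < ρ) (hρρ' : ρ < ρ') {X : Type*}
    [NormedAddCommGroup X] [InnerProductSpace ℂ X] [CompleteSpace X] (A : Fin N → X →L[ℂ] X)
    (h : MemC N ρ A) : MemC N ρ' A := by
  have hρ' : 0 < ρ' := hρ.trans hρρ'
  set σ : Equiv.Perm (Option ℤ) := Equiv.optionCongr (Equiv.addRight (1 : ℤ)) with hσ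
  set g : Option ℤ → ℝ := fun o => o.elim (√(ρ / ρ')) (fun k => if k = 0 then √(1 - ρ / ρ') else 0)
    with hgdef
  have hσn : ∀ n : ℕ, (σ ^ n) none = none := fun n => by
    induction n with
    | zero => rfl
    | succ n ih => rw [pow_succ', Equiv.Perm.mul_apply, ih]; rfl
  have hσs : ∀ (n : ℕ) (k : ℤ), (σ ^ n) (some k) = some (k + n) := fun n k => by
    induction n with
    | zero => simp
    | succ n ih =>
      rw [pow_succ', Equiv.Perm.mul_apply, ih]
      simp [hσ, add_assoc]
  have h0 : 0 ≤ ρ / ρ' := by positivity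
  have h1 : 0 ≤ 1 - ρ / ρ' := by
    rw [sub_nonneg, div_le_one hρ']; exact hρρ'.le
  have hg : HasSum (fun i => g i * g i) 1 := by
    have : (1 : ℝ) = ∑ i ∈ {none, some 0}, g i * g i := by
      rw [Finset.sum_pair (by simp)]
      simp [hgdef, Real.mul_self_sqrt h0, Real.mul_self_sqrt h1]
    rw [this]
    refine hasSum_sum_of_ne_finset_zero ?_
    rintro (_ | k) hk
    · simp at hk
    · have : k ≠ 0 := by rintro rfl; simp at hk
      simp [hgdef, this]
  have := key N ρ ρ' 1 hρ'.ne' A σ g hg (fun n hn => by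
    have : 1 ^ n * ρ / ρ' = ∑ i ∈ {none}, g ((σ ^ n) i) * g i := by
      rw [Finset.sum_singleton, hσn]
      simp [hgdef, Real.mul_self_sqrt h0]
    rw [this]
    refine hasSum_sum_of_ne_finset_zero ?_
    rintro (_ | k) hk
    · simp at hk
    · rw [hσs]
      by_cases h : k = 0
      · subst h
        have : n ≠ 0 := by omega
        simp [hgdef, this]
      · simp [hgdef, h]) h
  simpa using this

theorem memC_scale (N : ℕ) (ρ ρ' : ℝ) (hρ : 0 < ρ) (hρρ' : ρ < ρ') {X : Type*}
    [NormedAddCommGroup X] [InnerProductSpace ℂ X] [CompleteSpace X] (A : Fin N → X →L[ℂ] X)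
    (h : MemC N ρ' A) : MemC N ρ (fun k => (((2 * ρ' / ρ - 1)⁻¹ : ℝ) : ℂ) • A k) := by
  have hρ' : 0 < ρ' := hρ.trans hρρ'
  have hq : 1 < 2 * ρ' / ρ - 1 := by
    have : 1 < ρ' / ρ := by rwa [one_lt_div hρ]
    rw [mul_div_assoc]; linarith
  set r : ℝ := (2 * ρ' / ρ - 1)⁻¹ with hr
  have hr0 : 0 < r := by positivity
  have hr1 : r < 1 := inv_lt_one_of_one_lt₀ hq
  have hcr : ρ' / ρ = (1 + r) / (2 * r) := by
    have : 2 * ρ' / ρ = r⁻¹ + 1 := by rw [hr, inv_inv]; ring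
    have h2 : ρ' / ρ = (r⁻¹ + 1) / 2 := by rw [← this]; ring
    rw [h2]; field_simp
  set s : ℝ := √((1 - r) / 2) with hs
  have hss : s * s = (1 - r) / 2 := Real.mul_self_sqrt (by linarith)
  set g : ℤ → ℝ := fun k => if k < 0 then 0 else if k = 0 then s else s * (1 + r) * r ^ (k.toNat - 1)
    with hgdef
  set σ : Equiv.Perm ℤ := Equiv.addRight (1 : ℤ) with hσ
  have hσn : ∀ (n : ℕ) (k : ℤ), (σ ^ n) k = k + n := fun n k => by
    induction n with
    | zero => simp
    | succ n ih =>
      rw [pow_succ', Equiv.Perm.mul_apply, ih]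
      simp [hσ, add_assoc]
  have g0 : g 0 = s := by simp [hgdef]
  have gs : ∀ m : ℕ, g ((m : ℤ) + 1) = s * (1 + r) * r ^ m := fun m => by
    have a : ¬ ((m : ℤ) + 1 < 0) := by omega
    have b : ¬ ((m : ℤ) + 1 = 0) := by omega
    have c : ((m : ℤ) + 1).toNat - 1 = m := by omega
    simp only [hgdef, if_neg a, if_neg b, c]
  have gn : ∀ m : ℕ, g (-((m : ℤ) + 1)) = 0 := fun m => by
    have a : (-((m : ℤ) + 1) < 0) := by omega
    simp only [hgdef, if_pos a]
  have hgeo : HasSum (fun m : ℕ => (r * r) ^ m) (1 - r * r)⁻¹ :=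
    hasSum_geometric_of_lt_one (by positivity) (by nlinarith)
  have hne : 1 - r * r ≠ 0 := by nlinarith
  have hne' : 1 - r ≠ 0 := by linarith
  have hne2 : 1 + r ≠ 0 := by linarith
  have main : ∀ (n : ℕ) (v : ℝ), g n * s + s * s * (1 + r) ^ 2 * r ^ n * (1 - r * r)⁻¹ = v →
      HasSum (fun i : ℤ => g (i + n) * g i) v := by
    intro n v hv
    have hnat : HasSum (fun m : ℕ => g ((m : ℤ) + n) * g m) v := by
      rw [← hasSum_nat_add_iff' 1]
      have hv' : v - ∑ i ∈ Finset.range 1, g ((i : ℤ) + n) * g i =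
          s * s * (1 + r) ^ 2 * r ^ n * (1 - r * r)⁻¹ := by
        simp [← hv, g0]
      rw [hv']
      have hgm := hgeo.mul_left (s * s * (1 + r) ^ 2 * r ^ n)
      refine (congrArg (fun F : ℕ → ℝ => HasSum F
        (s * s * (1 + r) ^ 2 * r ^ n * (1 - r * r)⁻¹)) (funext fun m => ?_)).mpr hgm
      show _ = s * s * (1 + r) ^ 2 * r ^ n * (r * r) ^ m
      have e : ((m + 1 : ℕ) : ℤ) + n = ((m + n : ℕ) : ℤ) + 1 := by push_cast; ring
      rw [e, gs]
      push_cast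
      rw [gs]
      ring
    have := HasSum.of_nat_of_neg_add_one (f := fun i : ℤ => g (i + n) * g i) hnat
      (m' := 0) (by
        simp only [gn, mul_zero]
        exact hasSum_zero)
    simpa using this
  have hfac : 1 - r * r = (1 - r) * (1 + r) := by ring
  refine key N ρ' ρ r hρ.ne' A σ g ?_ (fun n hn => ?_) h
  · have := main 0 1 (by
      simp only [Nat.cast_zero, g0, hss, hfac]
      field_simp
      ring)
    simpa using this
  · simp only [hσn]
    refine main n _ ?_
    obtain ⟨m, rfl⟩ : ∃ m, n = m + 1 := ⟨n - 1, by omega⟩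
    rw [mul_div_assoc, hcr]
    push_cast
    rw [gs, show s * (1 + r) * r ^ m * s = s * s * ((1 + r) * r ^ m) by ring, hss, hfac]
    field_simp
    ring

/-- for `0 < ρ < ρ'` one has
`w_{ρ',N}(A) ≤ w_{ρ,N}(A) ≤ (2ρ'/ρ − 1)·w_{ρ',N}(A)`. -/
theorem wRad_antitone_bounds (N : ℕ) (hN : 1 ≤ N) (ρ ρ' : ℝ) (hρ : 0 < ρ) (hρρ' : ρ < ρ')
    {X : Type*} [NormedAddCommGroup X] [InnerProductSpace ℂ X] [CompleteSpace X]
    (A : Fin N → X →L[ℂ] X) :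
    wRad N ρ' A ≤ wRad N ρ A ∧ wRad N ρ A ≤ (2 * ρ' / ρ - 1) * wRad N ρ' A := by
  have hρ' : 0 < ρ' := hρ.trans hρρ'
  have hq : 1 < 2 * ρ' / ρ - 1 := by
    have : 1 < ρ' / ρ := by rwa [one_lt_div hρ]
    rw [mul_div_assoc]; linarith
  have hq0 : 0 < 2 * ρ' / ρ - 1 := by linarith
  have hb : ∀ τ : ℝ, BddBelow (wSet N τ A) := fun τ => ⟨0, fun u hu => hu.1.le⟩
  have hsub : wSet N ρ A ⊆ wSet N ρ' A := fun u hu => ⟨hu.1, memC_mono N ρ ρ' hρ hρρ' _ hu.2⟩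
  have hsc : ∀ u ∈ wSet N ρ' A, (2 * ρ' / ρ - 1) * u ∈ wSet N ρ A := fun u hu => by
    refine ⟨mul_pos hq0 hu.1, ?_⟩
    have := memC_scale N ρ ρ' hρ hρρ' _ hu.2
    convert this using 2 with k
    rw [smul_smul]
    push_cast
    rw [mul_inv]
  unfold wRad
  rcases (wSet N ρ' A).eq_empty_or_nonempty with he | hne
  · have he2 : wSet N ρ A = ∅ := Set.subset_empty_iff.1 (he ▸ hsub)
    simp [he, he2]
  · obtain ⟨u, hu⟩ := hne
    refine ⟨csInf_le_csInf (hb _) ⟨_, hsc u hu⟩ hsub, ?_⟩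
    rw [← div_le_iff₀' hq0]
    refine le_csInf ⟨u, hu⟩ fun v hv => ?_
    rw [div_le_iff₀' hq0]
    exact csInf_le (hb _) (hsc v hv)
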